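/- Run the non-convex proximal multiplicative weighting algorithm with step sizes η_x^{(t)} ≤ 1/L_h, and suppose |f_i(x^{(t)})| ≤ R_f for all i and t. Then (1/T)·Σ_{t=1}^T ‖x^{(t+1)} − x^{(t)}‖₂² ≤ 2·L(p^{(0)}, x^{(0)})/(L_h T) + (4 R_f² / (L_h T))·Σ_t η_p^{(t)}. -/

import Mathlib

/-!
The bound is a descent argument on `t ↦ L(p⁽ᵗ⁾, x⁽ᵗ⁾)`.

* The proximal step satisfies the variational inequality of `prox_inequality`, which improves the
  plain minimality inequality by `‖d‖²/2`, `d = x⁽ᵗ⁺¹⁾ - x⁽ᵗ⁾`. Combined with strong smoothness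
  of the smooth part and `η_x ≤ 1/L_h` it gives
  `(L_h/2)‖d‖² ≤ L(p⁽ᵗ⁾, x⁽ᵗ⁾) - L(p⁽ᵗ⁾, x⁽ᵗ⁺¹⁾)`.
* All `f_i` are nonnegative, so a multiplicative update with losses in `[0, R]` shrinks each weight
  by a factor at least `exp(-η R) ≥ 1 - η R`; hence replacing `p⁽ᵗ⁾` by `p⁽ᵗ⁺¹⁾` raises
  `⟨p, g⟩` by at most `η R²` for every `g` with values in `[0, R]` (`mw_gain_le`).

The sum over `t` telescopes, and the last value `L(p⁽ᵀ⁾, x⁽ᵀ⁾)` is nonnegative. This yields the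
constant `2 R²` in front of `∑ η_p`, half of what is required.
-/

open Set Finset

/-- The ℓ₁ norm on `Fin n → ℝ`. -/
noncomputable def l1norm {n : ℕ} (x : Fin n → ℝ) : ℝ := ∑ i, |x i|

/-- The squared Euclidean norm `‖x‖₂²` on `Fin n → ℝ`. -/
noncomputable def sqnorm {n : ℕ} (x : Fin n → ℝ) : ℝ := ∑ i, (x i) ^ 2

/-- The probability simplex `Δ_L`. -/
def stdSimplex' (L : ℕ) : Set (Fin L → ℝ) := {p | (∀ i, 0 ≤ p i) ∧ ∑ i, p i = 1}

/-- `g` is `Lg`-strongly smooth. -/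
def StronglySmooth {n : ℕ} (g : (Fin n → ℝ) → ℝ) (Lg : ℝ) : Prop :=
  ∀ u v : Fin n → ℝ, g v ≤ g u + fderiv ℝ g u (v - u) + Lg / 2 * sqnorm (u - v)

lemma sqnorm_nonneg {n : ℕ} (x : Fin n → ℝ) : 0 ≤ sqnorm x :=
  Finset.sum_nonneg fun i _ => sq_nonneg (x i)

lemma l1norm_nonneg {n : ℕ} (x : Fin n → ℝ) : 0 ≤ l1norm x :=
  Finset.sum_nonneg fun i _ => abs_nonneg (x i)

/-- First-order extraction: a quadratic in `s` without constant term that is nonnegative on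
`(0, 1]` has nonnegative slope at `0`. -/
lemma nonneg_of_forall_small {a b : ℝ}
    (hab : ∀ s : ℝ, 0 < s → s ≤ 1 → 0 ≤ s * a + s ^ 2 * b) : 0 ≤ a := by
  by_contra! ha
  have hb : 0 < b := by have := hab 1 one_pos le_rfl; linarith
  -- `s = -a / (2b - a)` lies in `(0, 1]` and gives `a + s b < 0`.
  have hden : 0 < 2 * b - a := by linarith
  have hs : 0 < -a / (2 * b - a) := div_pos (by linarith) hden
  have hs1 : -a / (2 * b - a) ≤ 1 := by rw [div_le_one hden]; linarith
  have h1 := hab _ hs hs1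
  have h2 : a + -a / (2 * b - a) * b < 0 := by
    have : a + -a / (2 * b - a) * b = a * (b - a) / (2 * b - a) := by
      field_simp; ring
    rw [this]
    exact div_neg_of_neg_of_pos (mul_neg_of_neg_of_pos ha (by linarith)) hden
  nlinarith [mul_neg_of_pos_of_neg hs h2]

/-- Optimality of the proximal point `v` of `u - η g`, tested against the point `u` along the
segment from `v` to `u`. -/
lemma prox_inequality {n : ℕ} (u v g : Fin n → ℝ) (η : ℝ) (hη : 0 < η)
    (hmin : ∀ z : Fin n → ℝ,
      η * l1norm v + 1 / 2 * sqnorm (fun j => v j - (u j - η * g j))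
        ≤ η * l1norm z + 1 / 2 * sqnorm (fun j => z j - (u j - η * g j))) :
    η * l1norm v + η * ∑ j, g j * (v - u) j + sqnorm (v - u) ≤ η * l1norm u := by
  suffices H : 0 ≤ η * (l1norm u - l1norm v)
      + ∑ j, (v j - (u j - η * g j)) * (u j - v j) by
    have e : ∑ j, (v j - (u j - η * g j)) * (u j - v j)
        = -(η * ∑ j, g j * (v - u) j) - sqnorm (v - u) := by
      unfold sqnorm
      rw [Finset.mul_sum, ← Finset.sum_neg_distrib, ← Finset.sum_sub_distrib]
      refine Finset.sum_congr rfl fun j _ => ?_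
      simp only [Pi.sub_apply]; ring
    linarith
  refine nonneg_of_forall_small (b := 1 / 2 * sqnorm (u - v)) fun s hs hs1 => ?_
  have h1 := hmin (fun j => v j + s * (u j - v j))
  have h2 : l1norm (fun j => v j + s * (u j - v j)) ≤ (1 - s) * l1norm v + s * l1norm u := by
    unfold l1norm
    rw [Finset.mul_sum, Finset.mul_sum, ← Finset.sum_add_distrib]
    refine Finset.sum_le_sum fun j _ => ?_
    have e : v j + s * (u j - v j) = (1 - s) * v j + s * u j := by ring
    beta_reduce
    rw [e]
    refine (abs_add_le _ _).trans (le_of_eq ?_)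
    rw [abs_mul, abs_mul, abs_of_nonneg (by linarith : 0 ≤ 1 - s), abs_of_pos hs]
  have h3 : sqnorm (fun j => v j + s * (u j - v j) - (u j - η * g j))
      = sqnorm (fun j => v j - (u j - η * g j))
        + 2 * s * ∑ j, (v j - (u j - η * g j)) * (u j - v j) + s ^ 2 * sqnorm (u - v) := by
    unfold sqnorm
    rw [Finset.mul_sum, Finset.mul_sum, ← Finset.sum_add_distrib, ← Finset.sum_add_distrib]
    refine Finset.sum_congr rfl fun j _ => ?_
    simp only [Pi.sub_apply]; ring
  rw [h3] at h1
  nlinarith [mul_le_mul_of_nonneg_left h2 hη.le]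

lemma mw_normalizer_pos {L : ℕ} {p f : Fin L → ℝ} (η : ℝ) (hp : p ∈ stdSimplex' L) :
    0 < ∑ j, p j * Real.exp (-η * f j) := by
  obtain ⟨h0, h1⟩ := hp
  have hex : ∃ j ∈ (Finset.univ : Finset (Fin L)), 0 < p j := by
    apply Finset.exists_lt_of_sum_lt (f := fun _ => (0 : ℝ))
    simp [h1]
  obtain ⟨j, hj, hpj⟩ := hex
  exact Finset.sum_pos' (fun i _ => mul_nonneg (h0 i) (Real.exp_pos _).le)
    ⟨j, hj, mul_pos hpj (Real.exp_pos _)⟩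

lemma mw_mem_simplex {L : ℕ} {p q f : Fin L → ℝ} (η : ℝ) (hp : p ∈ stdSimplex' L)
    (hq : ∀ i, q i = p i * Real.exp (-η * f i) / ∑ j, p j * Real.exp (-η * f j)) :
    q ∈ stdSimplex' L := by
  have hZ := mw_normalizer_pos (f := f) η hp
  refine ⟨fun i => ?_, ?_⟩
  · rw [hq]; exact div_nonneg (mul_nonneg (hp.1 i) (Real.exp_pos _).le) hZ.le
  · simp_rw [hq]; rw [← Finset.sum_div, div_self hZ.ne']

/-- One multiplicative-weights step with losses in `[0, R]` increases the average of any function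
with values in `[0, R]` by at most `η R²`. -/
lemma mw_gain_le {L : ℕ} {p q f g : Fin L → ℝ} {η R : ℝ} (hη : 0 ≤ η) (hR : 0 ≤ R)
    (hp : p ∈ stdSimplex' L)
    (hq : ∀ i, q i = p i * Real.exp (-η * f i) / ∑ j, p j * Real.exp (-η * f j))
    (hf0 : ∀ i, 0 ≤ f i) (hfR : ∀ i, f i ≤ R) (hg0 : ∀ i, 0 ≤ g i) (hgR : ∀ i, g i ≤ R) :
    ∑ i, q i * g i ≤ ∑ i, p i * g i + η * R ^ 2 := by
  have hZ := mw_normalizer_pos (f := f) η hp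
  have hZ1 : ∑ j, p j * Real.exp (-η * f j) ≤ 1 := by
    rw [← hp.2]
    refine Finset.sum_le_sum fun j _ => mul_le_of_le_one_right (hp.1 j) ?_
    rw [Real.exp_le_one_iff]
    nlinarith [mul_nonneg hη (hf0 j)]
  have hlow : ∀ i, p i * (1 - η * R) ≤ q i := fun i => by
    have h1 : 1 - η * R ≤ Real.exp (-η * f i) := by
      have := Real.add_one_le_exp (-η * f i)
      nlinarith [mul_le_mul_of_nonneg_left (hfR i) hη]
    rw [hq]
    calc p i * (1 - η * R) ≤ p i * Real.exp (-η * f i) := mul_le_mul_of_nonneg_left h1 (hp.1 i)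
      _ ≤ _ := le_div_self (mul_nonneg (hp.1 i) (Real.exp_pos _).le) hZ hZ1
  have hqs := (mw_mem_simplex η hp hq).2
  -- Both weight vectors have mass `1`, so `g` may be replaced by `R - g ≥ 0` up to sign.
  have hsum : ∑ i, p i * (1 - η * R) * (R - g i) ≤ ∑ i, q i * (R - g i) :=
    Finset.sum_le_sum fun i _ =>
      mul_le_mul_of_nonneg_right (hlow i) (by linarith [hgR i])
  have e1 : ∑ i, q i * (R - g i) = R - ∑ i, q i * g i := by
    simp_rw [mul_sub]; rw [Finset.sum_sub_distrib, ← Finset.sum_mul, hqs, one_mul]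
  have e2 : ∑ i, p i * (1 - η * R) * (R - g i) = (1 - η * R) * (R - ∑ i, p i * g i) := by
    have : R - ∑ i, p i * g i = ∑ i, p i * (R - g i) := by
      simp_rw [mul_sub]; rw [Finset.sum_sub_distrib, ← Finset.sum_mul, hp.2, one_mul]
    rw [this, Finset.mul_sum]
    exact Finset.sum_congr rfl fun i _ => by ring
  rw [e1, e2] at hsum
  have hpg : 0 ≤ ∑ i, p i * g i := Finset.sum_nonneg fun i _ => mul_nonneg (hp.1 i) (hg0 i)
  nlinarith [mul_nonneg (mul_nonneg hη hR) hpg]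

/-- The gradient of the smooth part of `L(p, ·)`, in the coordinates used by the algorithm. -/
lemma fderiv_smooth_part {M N L : ℕ} (A : Fin M → Fin N → ℝ) (y : Fin M → ℝ) (lam1 lam2 : ℝ)
    (h : Fin L → (Fin N → ℝ) → ℝ) (gradh : Fin L → (Fin N → ℝ) → (Fin N → ℝ))
    (hdiff : ∀ i, Differentiable ℝ (h i))
    (hgrad : ∀ i u v, fderiv ℝ (h i) u v = ∑ j, gradh i u j * v j)
    (p : Fin L → ℝ) (u v : Fin N → ℝ) :
    fderiv ℝ (fun x => (∑ i, p i * h i x)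
          + lam1 / 2 * sqnorm (fun k => y k - ∑ j, A k j * x j)
          + lam2 / 2 * sqnorm x) u v
      = ∑ j, ((∑ i, p i * gradh i u j)
        + lam1 * ∑ k, A k j * ((∑ j', A k j' * u j') - y k) + lam2 * u j) * v j := by
  unfold sqnorm
  have hc : ∀ j, HasFDerivAt (fun x : Fin N → ℝ => x j)
      (ContinuousLinearMap.proj (R := ℝ) (φ := fun _ : Fin N => ℝ) j) u :=
    fun j => (ContinuousLinearMap.proj (R := ℝ) (φ := fun _ : Fin N => ℝ) j).hasFDerivAt
  have h1 := HasFDerivAt.fun_sum (u := Finset.univ) fun i (_ : i ∈ Finset.univ) =>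
    ((hdiff i u).hasFDerivAt).const_mul (p i)
  have h2 := (HasFDerivAt.fun_sum (u := Finset.univ) fun k (_ : k ∈ Finset.univ) =>
    ((HasFDerivAt.fun_sum (u := Finset.univ) fun j (_ : j ∈ Finset.univ) =>
      (hc j).const_mul (A k j)).const_sub (y k)).pow 2).const_mul (lam1 / 2)
  have h3 := (HasFDerivAt.fun_sum (u := Finset.univ) fun j (_ : j ∈ Finset.univ) =>
    (hc j).pow 2).const_mul (lam2 / 2)
  rw [((h1.fun_add h2).fun_add h3).fderiv]
  simp only [_root_.add_apply, _root_.sum_apply,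
    _root_.smul_apply, _root_.neg_apply,
    ContinuousLinearMap.proj_apply, smul_eq_mul, hgrad]
  simp only [add_mul, Finset.sum_add_distrib]
  congr 1
  · congr 1
    · simp only [Finset.mul_sum, Finset.sum_mul]
      rw [Finset.sum_comm]
      exact Finset.sum_congr rfl fun j _ => Finset.sum_congr rfl fun i _ => by ring
    · have e : ∀ j, lam1 * (∑ k, A k j * ((∑ j', A k j' * u j') - y k)) * v j
          = ∑ k, lam1 * (A k j * ((∑ j', A k j' * u j') - y k)) * v j := fun j => by
        rw [Finset.mul_sum, Finset.sum_mul]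
      simp_rw [e]
      rw [Finset.sum_comm, Finset.mul_sum]
      refine Finset.sum_congr rfl fun k _ => ?_
      rw [← Finset.sum_neg_distrib, Finset.mul_sum, Finset.mul_sum]
      refine Finset.sum_congr rfl fun j _ => ?_
      ring
  · rw [Finset.mul_sum]
    refine Finset.sum_congr rfl fun j _ => ?_
    ring

/-- Theorem 3 of the paper: for the non-convex proximal
multiplicative weighting algorithm with step sizes `η_x^{(t)} ≤ 1/L_h`, if
`|fᵢ(x^{(t)})| ≤ R_f`, then
`(1/T) Σ_t ‖x^{(t+1)} − x^{(t)}‖₂² ≤ 2L(p⁰,x⁰)/(L_h T) + (4R_f²/(L_h T)) Σ_t η_p^{(t)}`. -/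
theorem noncvx_prox_mw_iterate_gap {M N L T : ℕ} (hL : 1 < L) (hT : 0 < T)
    (A : Fin M → Fin N → ℝ) (y : Fin M → ℝ)
    (lam1 lam2 : ℝ) (hlam1 : 0 < lam1) (hlam2 : 0 < lam2)
    (h : Fin L → (Fin N → ℝ) → ℝ)
    (gradh : Fin L → (Fin N → ℝ) → (Fin N → ℝ))
    (hconv : ∀ i, ConvexOn ℝ Set.univ (h i))
    (hnonneg : ∀ i x, 0 ≤ h i x)
    (hdiff : ∀ i, Differentiable ℝ (h i))
    (hgrad : ∀ i u v, fderiv ℝ (h i) u v = ∑ j, gradh i u j * v j)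
    (f : Fin L → (Fin N → ℝ) → ℝ)
    (hf : ∀ i x, f i x = l1norm x + h i x
        + lam1 / 2 * sqnorm (fun k => y k - ∑ j, A k j * x j)
        + lam2 / 2 * sqnorm x)
    (Lfun : (Fin L → ℝ) → (Fin N → ℝ) → ℝ)
    (hLfun : ∀ p x, Lfun p x = ∑ i, p i * f i x)
    (Lh : ℝ) (hLh : 0 < Lh)
    (hsmooth : ∀ p ∈ stdSimplex' L,
      StronglySmooth
        (fun x => (∑ i, p i * h i x)
          + lam1 / 2 * sqnorm (fun k => y k - ∑ j, A k j * x j)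
          + lam2 / 2 * sqnorm x) Lh)
    -- the algorithm iterates, with possibly time-varying step sizes
    (p : ℕ → Fin L → ℝ) (x : ℕ → Fin N → ℝ)
    (ηx ηp : ℕ → ℝ) (Rf : ℝ) (hRf : 0 < Rf)
    (hηx : ∀ t, 0 < ηx t) (hηxLh : ∀ t, ηx t ≤ 1 / Lh)
    (hηp : ∀ t, 0 ≤ ηp t)
    (hp0 : ∀ i, p 0 i = (L : ℝ)⁻¹)
    (hx0 : x 0 = 0)
    (hpupd : ∀ t i, p (t + 1) i
      = p t i * Real.exp (-(ηp t) * f i (x t)) / ∑ j, p t j * Real.exp (-(ηp t) * f j (x t)))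
    (G : ℕ → Fin N → ℝ)
    (hG : ∀ t j, G t j = (∑ i, p t i * gradh i (x t) j)
        + lam1 * ∑ k, A k j * ((∑ j', A k j' * x t j') - y k) + lam2 * x t j)
    (hxupd : ∀ t, ∀ z : Fin N → ℝ,
      ηx t * l1norm (x (t + 1))
          + 1 / 2 * sqnorm (fun j => x (t + 1) j - (x t j - ηx t * G t j))
        ≤ ηx t * l1norm z + 1 / 2 * sqnorm (fun j => z j - (x t j - ηx t * G t j)))
    (hfbound : ∀ t ≤ T, ∀ i, |f i (x t)| ≤ Rf) :
    (∑ t ∈ Finset.range T, sqnorm (x (t + 1) - x t)) / T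
      ≤ 2 * Lfun (p 0) (x 0) / (Lh * T)
        + 4 * Rf ^ 2 * (∑ t ∈ Finset.range T, ηp t) / (Lh * T) := by
  have hf0 : ∀ i z, 0 ≤ f i z := fun i z => by
    rw [hf]
    have h1 := l1norm_nonneg z
    have h2 := hnonneg i z
    have h3 := mul_nonneg (half_pos hlam1).le
      (sqnorm_nonneg (fun k => y k - ∑ j, A k j * z j))
    have h4 := mul_nonneg (half_pos hlam2).le (sqnorm_nonneg z)
    linarith
  have hps : ∀ t, p t ∈ stdSimplex' L := fun t => by
    induction t with
    | zero =>
      have hL0 : (L : ℝ) ≠ 0 := by positivity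
      refine ⟨fun i => ?_, ?_⟩
      · rw [hp0]; positivity
      · simp_rw [hp0]; simp [hL0]
    | succ t ih => exact mw_mem_simplex (ηp t) ih (hpupd t)
  have hsplit : ∀ t z, Lfun (p t) z = l1norm z + ((∑ i, p t i * h i z)
      + lam1 / 2 * sqnorm (fun k => y k - ∑ j, A k j * z j) + lam2 / 2 * sqnorm z) := by
    intro t z
    rw [hLfun]
    simp_rw [hf, mul_add]
    simp only [Finset.sum_add_distrib, ← Finset.sum_mul, (hps t).2]
    ring
  have hdesc : ∀ t, Lh / 2 * sqnorm (x (t + 1) - x t)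
      ≤ Lfun (p t) (x t) - Lfun (p t) (x (t + 1)) := by
    intro t
    have hs := hsmooth (p t) (hps t) (x t) (x (t + 1))
    rw [fderiv_smooth_part A y lam1 lam2 h gradh hdiff hgrad] at hs
    simp_rw [← hG t] at hs
    have hsym : sqnorm (x t - x (t + 1)) = sqnorm (x (t + 1) - x t) := by
      unfold sqnorm
      exact Finset.sum_congr rfl fun j _ => by simp only [Pi.sub_apply]; ring
    rw [hsym] at hs
    have hpx := prox_inequality (x t) (x (t + 1)) (G t) (ηx t) (hηx t) (hxupd t)
    have hηL : ηx t * Lh ≤ 1 := by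
      have := hηxLh t
      rwa [le_div_iff₀ hLh] at this
    -- Dividing the proximal inequality by `ηx t` and using `Lh ≤ 1 / ηx t`.
    have hpx' : l1norm (x (t + 1)) + ∑ j, G t j * (x (t + 1) - x t) j
        + Lh * sqnorm (x (t + 1) - x t) ≤ l1norm (x t) := by
      refine le_of_mul_le_mul_left ?_ (hηx t)
      nlinarith [mul_le_mul_of_nonneg_right hηL (sqnorm_nonneg (x (t + 1) - x t))]
    rw [hsplit, hsplit]
    linarith
  have hgain : ∀ t < T, Lfun (p (t + 1)) (x (t + 1))
      ≤ Lfun (p t) (x (t + 1)) + ηp t * Rf ^ 2 := by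
    intro t ht
    rw [hLfun, hLfun]
    exact mw_gain_le (hηp t) hRf.le (hps t) (hpupd t) (fun i => hf0 i _)
      (fun i => (abs_le.mp (hfbound t ht.le i)).2) (fun i => hf0 i _)
      (fun i => (abs_le.mp (hfbound (t + 1) ht i)).2)
  have hsum : Lh / 2 * ∑ t ∈ Finset.range T, sqnorm (x (t + 1) - x t)
      ≤ Lfun (p 0) (x 0) + Rf ^ 2 * ∑ t ∈ Finset.range T, ηp t := by
    have h1 : ∑ t ∈ Finset.range T, Lh / 2 * sqnorm (x (t + 1) - x t)
        ≤ ∑ t ∈ Finset.range T,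
          ((Lfun (p t) (x t) - Lfun (p (t + 1)) (x (t + 1))) + Rf ^ 2 * ηp t) := by
      refine Finset.sum_le_sum fun t ht => ?_
      linarith [hdesc t, hgain t (Finset.mem_range.mp ht)]
    rw [Finset.sum_add_distrib, Finset.sum_range_sub' (fun t => Lfun (p t) (x t)),
      ← Finset.mul_sum, ← Finset.mul_sum] at h1
    have h2 : 0 ≤ Lfun (p T) (x T) := by
      rw [hLfun]
      exact Finset.sum_nonneg fun i _ => mul_nonneg ((hps T).1 i) (hf0 i _)
    linarith
  have hT' : (0 : ℝ) < T := by exact_mod_cast hT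
  have hη0 : 0 ≤ Rf ^ 2 * ∑ t ∈ Finset.range T, ηp t :=
    mul_nonneg (sq_nonneg _) (Finset.sum_nonneg fun t _ => hηp t)
  rw [← add_div, div_le_div_iff₀ hT' (mul_pos hLh hT')]
  nlinarith
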